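/- Let N ≥ 1 and s ∈ (0,1) with N > 2s, let υ ∈ ℝ^N with υ ≠ 0, let ε > 0, and let ρ : ℝ → ℝ be smooth with compact support in (−2,2). For μ > 0 define W(μ; p, q) := μ|p−q|·(1 + |υ + μq|) + | |υ + μp|^{2s−N} − |υ + μq|^{2s−N} |. Then lim_{μ→0⁺} ∬_{B_{ε/μ}(0) × B_{2ε/μ}(0)} W(μ; p, q) · |ρ(|p|²) − ρ(|q|²)| / ( |q|^{N−2s} · |p−q|^{N+2s} ) dp dq = 0. -/

import Mathlib

/-!
The integral is `O(μ ^ s)`. Write `d` for the dimension, `c = d - s` and `b = d + s`.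

For `0 ≤ θ ≤ 1` one has `||u|^{-a} - |v|^{-a}| ≤ C |u - v|^θ (|u|^{-(a+θ)} + |v|^{-(a+θ)})`. With
`a = d - 2s` and `θ = s` the exponent `a + θ = c` stays below `d`, so the singularity remains
integrable. On the domain of integration this gives
`W ≤ C (μ|p - q|)^s (1 + |υ + μp|^{-c} + |υ + μq|^{-c})`, where `|υ + μx|^{-c}` may be replaced by
its truncation `S(x)` to `|υ + μx| < |υ|/2`.

The increment of the cutoff is at most `L min(1, |p - q|)`, and `k(z) = min(1, |z|) |z|^{-b}` is
integrable. Let `R ≥ 1` be such that `B_R` contains the support of the cutoff. The increment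
vanishes unless `p` or `q` lies in `B_R`, and for small `μ` a point `x` with `S(x) ≠ 0` is at
distance at least `|υ|/(4μ)` from `B_R`, which bounds the kernel by `(4μ/|υ|)^b`. What remains is
dominated by products and convolutions of integrable functions. Substituting `y = υ + μx` shows
that `∫ S` is of order `μ^{-d}`, which the factor `μ^b` absorbs.
-/

open MeasureTheory Filter
open scoped ENNReal Topology

noncomputable section

open Module (finrank)

section RealPowers

variable {a θ x y : ℝ}

lemma one_sub_one_add_rpow_neg_le_mul {t : ℝ} (ha : 0 ≤ a) (ht : 0 ≤ t) :
    1 - (1 + t) ^ (-a) ≤ a * t := by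
  have hlog : Real.log (1 + t) ≤ t := by
    linarith [Real.log_le_sub_one_of_pos (show 0 < 1 + t by positivity)]
  have hexp := Real.add_one_le_exp (Real.log (1 + t) * -a)
  rw [Real.rpow_def_of_pos (by positivity)]
  nlinarith

lemma one_sub_one_add_rpow_neg_le_rpow {t : ℝ} (ha : 0 ≤ a) (hθ : 0 ≤ θ) (hθ1 : θ ≤ 1)
    (ht : 0 ≤ t) : 1 - (1 + t) ^ (-a) ≤ (1 + a) * t ^ θ := by
  rcases le_total t 1 with ht1 | ht1
  · have hpow : t ≤ t ^ θ := Real.self_le_rpow_of_le_one ht ht1 hθ1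
    nlinarith [one_sub_one_add_rpow_neg_le_mul ha ht]
  · have hpow : 1 ≤ t ^ θ := Real.one_le_rpow ht1 hθ
    have hpos : 0 ≤ (1 + t) ^ (-a) := by positivity
    nlinarith

lemma rpow_neg_sub_rpow_neg_le (ha : 0 ≤ a) (hθ : 0 ≤ θ) (hθ1 : θ ≤ 1) (hx : 0 < x)
    (hxy : x ≤ y) :
    x ^ (-a) - y ^ (-a) ≤ (1 + a) * (y - x) ^ θ * x ^ (-(a + θ)) := by
  obtain ⟨t, ht, rfl⟩ : ∃ t, 0 ≤ t ∧ y = x * (1 + t) :=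
    ⟨(y - x) / x, div_nonneg (by linarith) hx.le, by field_simp; ring⟩
  calc x ^ (-a) - (x * (1 + t)) ^ (-a) = x ^ (-a) * (1 - (1 + t) ^ (-a)) := by
        rw [Real.mul_rpow hx.le (by positivity)]; ring
    _ ≤ x ^ (-a) * ((1 + a) * t ^ θ) := by
        gcongr; exact one_sub_one_add_rpow_neg_le_rpow ha hθ hθ1 ht
    _ = (1 + a) * (x * (1 + t) - x) ^ θ * x ^ (-(a + θ)) := by
        rw [show x * (1 + t) - x = x * t by ring, Real.mul_rpow hx.le ht,
          show -a = θ + -(a + θ) by ring, Real.rpow_add hx]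
        ring

/-- The bound also covers `x = 0` or `y = 0`, where `0 ^ (-a) = 0` by convention. -/
lemma abs_rpow_neg_sub_le (ha : 0 < a) (hθ : 0 ≤ θ) (hθ1 : θ ≤ 1) (hx : 0 ≤ x) (hy : 0 ≤ y) :
    |x ^ (-a) - y ^ (-a)| ≤ (1 + a) * |x - y| ^ θ * (x ^ (-(a + θ)) + y ^ (-(a + θ))) := by
  wlog hxy : x ≤ y generalizing x y
  · rw [abs_sub_comm, abs_sub_comm x y, add_comm (x ^ _)]
    exact this hy hx (le_of_not_ge hxy)
  rw [abs_sub_comm x y, abs_of_nonneg (sub_nonneg.2 hxy)]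
  have hd : 0 ≤ (y - x) ^ θ := Real.rpow_nonneg (sub_nonneg.2 hxy) _
  rcases hx.eq_or_lt with rfl | hx0
  · rcases hy.eq_or_lt with rfl | hy0
    · simp only [sub_self, abs_zero]; positivity
    · have hpow : y ^ θ * y ^ (-(a + θ)) = y ^ (-a) := by
        rw [← Real.rpow_add hy0]; congr 1; ring
      have hpos : 0 ≤ y ^ (-a) := by positivity
      rw [Real.zero_rpow (by linarith), Real.zero_rpow (by linarith), zero_sub, abs_neg,
        abs_of_nonneg hpos, sub_zero, zero_add, mul_assoc, hpow]
      nlinarith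
  · rw [abs_of_nonneg (sub_nonneg.2 (Real.rpow_le_rpow_of_nonpos hx0 hxy (by linarith)))]
    refine (rpow_neg_sub_rpow_neg_le ha.le hθ hθ1 hx0 hxy).trans ?_
    gcongr
    exact le_add_of_nonneg_right (by positivity)

end RealPowers

section Kernels

variable {E : Type*} [NormedAddCommGroup E]

/-- The power `|x|^{-c}` truncated to the open ball of radius `R`. For `c = 0` this is the
indicator function of the ball. -/
def truncPow (c R : ℝ) (x : E) : ℝ :=
  if ‖x‖ < R then ‖x‖ ^ (-c) else 0

lemma truncPow_nonneg (c R : ℝ) (x : E) : 0 ≤ truncPow c R x := by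
  unfold truncPow; split_ifs <;> positivity

lemma truncPow_of_lt {c R : ℝ} {x : E} (h : ‖x‖ < R) : truncPow c R x = ‖x‖ ^ (-c) := if_pos h

lemma truncPow_of_le {c R : ℝ} {x : E} (h : R ≤ ‖x‖) : truncPow c R x = 0 := if_neg h.not_gt

lemma rpow_neg_le_add_truncPow {c R : ℝ} (hc : 0 ≤ c) (hR : 0 < R) (x : E) :
    ‖x‖ ^ (-c) ≤ R ^ (-c) + truncPow c R x := by
  rcases lt_or_ge ‖x‖ R with hx | hx
  · rw [truncPow_of_lt hx]
    exact le_add_of_nonneg_left (by positivity)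
  · rw [truncPow_of_le hx, add_zero]
    exact Real.rpow_le_rpow_of_nonpos hR hx (by linarith)

/-- The kernel `|z|^{-b}` damped to first order at the origin. Up to a constant it bounds
`|p - q|^{-b} |η(p) - η(q)|` at `z = p - q` for a bounded Lipschitz function `η`. -/
def dampedKernel (b : ℝ) (z : E) : ℝ :=
  min 1 ‖z‖ * ‖z‖ ^ (-b)

lemma dampedKernel_nonneg (b : ℝ) (z : E) : 0 ≤ dampedKernel b z := by
  unfold dampedKernel; positivity

lemma dampedKernel_sub_comm (b : ℝ) (x y : E) :
    dampedKernel b (x - y) = dampedKernel b (y - x) := by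
  rw [dampedKernel, norm_sub_rev, dampedKernel]

lemma dampedKernel_le_rpow_neg (b : ℝ) (z : E) : dampedKernel b z ≤ ‖z‖ ^ (-b) :=
  mul_le_of_le_one_left (by positivity) (min_le_left _ _)

lemma dampedKernel_le_truncPow_add {b : ℝ} (hb : 0 ≤ b) (z : E) :
    dampedKernel b z ≤ truncPow (b - 1) 1 z + 2 ^ b * (1 + ‖z‖) ^ (-b) := by
  rcases lt_or_ge ‖z‖ 1 with hz | hz
  · suffices dampedKernel b z ≤ ‖z‖ ^ (-(b - 1)) by
      rw [truncPow_of_lt hz]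
      exact this.trans (le_add_of_nonneg_right (by positivity))
    rw [dampedKernel, min_eq_right hz.le]
    rcases (norm_nonneg z).eq_or_lt with h0 | h0
    · rw [← h0, zero_mul]; positivity
    · rw [show -(b - 1) = 1 + -b by ring, Real.rpow_add h0, Real.rpow_one]
  · calc dampedKernel b z ≤ ‖z‖ ^ (-b) := dampedKernel_le_rpow_neg b z
      _ = 2 ^ b * (2 * ‖z‖) ^ (-b) := by
          rw [Real.mul_rpow two_pos.le (norm_nonneg z), ← mul_assoc, ← Real.rpow_add two_pos]
          simp
      _ ≤ 2 ^ b * (1 + ‖z‖) ^ (-b) := by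
          gcongr 2 ^ b * ?_
          exact Real.rpow_le_rpow_of_nonpos (by positivity) (by linarith) (by linarith)
      _ ≤ _ := le_add_of_nonneg_left (truncPow_nonneg _ _ _)

variable [MeasurableSpace E] [BorelSpace E]

@[fun_prop]
lemma measurable_truncPow (c R : ℝ) : Measurable (truncPow c R : E → ℝ) := by
  unfold truncPow
  exact Measurable.ite (measurableSet_lt (by fun_prop) (by fun_prop)) (by fun_prop) (by fun_prop)

@[fun_prop]
lemma measurable_dampedKernel (b : ℝ) : Measurable (dampedKernel b : E → ℝ) := by
  unfold dampedKernel; fun_prop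

variable [NormedSpace ℝ E] [FiniteDimensional ℝ E] (ν : Measure E) [ν.IsAddHaarMeasure]

lemma lintegral_truncPow_lt_top [Nontrivial E] {c : ℝ} (hc : c < finrank ℝ E) (R : ℝ) :
    ∫⁻ x, ENNReal.ofReal (truncPow c R x) ∂ν < ∞ := by
  have hint : IntegrableOn (fun x : E => ‖x‖ ^ (-c)) (Metric.ball 0 R) ν := by
    refine integrableOn_ball_of_norm_le_rpow (C := 1) Module.finrank_pos hc (.of_forall fun x => ?_)
      (Measurable.aestronglyMeasurable (by fun_prop))
    rw [Real.norm_of_nonneg (by positivity), one_mul]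
  convert ((integrable_indicator_iff measurableSet_ball).2 hint).lintegral_lt_top using 4 with x
  simp [truncPow, Set.indicator]

lemma lintegral_dampedKernel_lt_top [Nontrivial E] {b : ℝ} (hb : finrank ℝ E < b)
    (hb1 : b < finrank ℝ E + 1) : ∫⁻ z, ENNReal.ofReal (dampedKernel b z) ∂ν < ∞ := by
  have hb0 : 0 ≤ b := (Nat.cast_nonneg _).trans hb.le
  calc ∫⁻ z, ENNReal.ofReal (dampedKernel b z) ∂ν
      ≤ ∫⁻ z, ENNReal.ofReal (truncPow (b - 1) 1 z) +
          ENNReal.ofReal (2 ^ b) * ENNReal.ofReal ((1 + ‖z‖) ^ (-b)) ∂ν := by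
        refine lintegral_mono fun z => ?_
        rw [← ENNReal.ofReal_mul (by positivity),
          ← ENNReal.ofReal_add (truncPow_nonneg _ _ _) (by positivity)]
        exact ENNReal.ofReal_le_ofReal (dampedKernel_le_truncPow_add hb0 z)
    _ = ∫⁻ z, ENNReal.ofReal (truncPow (b - 1) 1 z) ∂ν +
          ENNReal.ofReal (2 ^ b) * ∫⁻ z, ENNReal.ofReal ((1 + ‖z‖) ^ (-b)) ∂ν := by
        rw [lintegral_add_left (by fun_prop), lintegral_const_mul _ (by fun_prop)]
    _ < ∞ := ENNReal.add_lt_top.2 ⟨lintegral_truncPow_lt_top ν (by linarith) 1,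
        ENNReal.mul_lt_top ENNReal.ofReal_lt_top (finite_integral_one_add_norm hb)⟩

end Kernels

section Tonelli

variable {E : Type*} [NormedAddCommGroup E] [NormedSpace ℝ E] [FiniteDimensional ℝ E]
  [MeasurableSpace E] [BorelSpace E] (ν : Measure E) [ν.IsAddHaarMeasure] {f g : E → ℝ≥0∞}

lemma lintegral_comp_add_smul {μ : ℝ} (hμ : 0 < μ) (υ : E) (hf : Measurable f) :
    ∫⁻ x, f (υ + μ • x) ∂ν = ENNReal.ofReal (μ ^ (-(finrank ℝ E : ℝ))) * ∫⁻ x, f x ∂ν := by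
  calc ∫⁻ x, f (υ + μ • x) ∂ν = ∫⁻ y, f (υ + y) ∂(Measure.map (μ • ·) ν) := by
        rw [lintegral_map (by fun_prop) (by fun_prop)]
    _ = _ := by
        rw [Measure.map_addHaar_smul _ hμ.ne', lintegral_smul_measure, lintegral_add_left_eq_self,
          abs_of_pos (by positivity), Real.rpow_neg hμ.le, Real.rpow_natCast, smul_eq_mul]

lemma lintegral_prod_fst_mul_sub (hf : Measurable f) (hg : Measurable g) :
    ∫⁻ z, f z.1 * g (z.1 - z.2) ∂(ν.prod ν) = (∫⁻ x, f x ∂ν) * ∫⁻ x, g x ∂ν := by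
  rw [lintegral_prod _ (by fun_prop), ← lintegral_mul_const _ hf]
  refine lintegral_congr fun p => ?_
  dsimp only
  rw [lintegral_const_mul _ (by fun_prop), lintegral_sub_left_eq_self]

lemma lintegral_prod_snd_mul_sub (hf : Measurable f) (hg : Measurable g) :
    ∫⁻ z, f z.2 * g (z.1 - z.2) ∂(ν.prod ν) = (∫⁻ x, f x ∂ν) * ∫⁻ x, g x ∂ν := by
  rw [lintegral_prod_symm _ (by fun_prop), ← lintegral_mul_const _ hf]
  refine lintegral_congr fun q => ?_
  dsimp only
  rw [lintegral_const_mul _ (by fun_prop), lintegral_sub_right_eq_self g]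

end Tonelli

section Weight

variable {E : Type*} [NormedAddCommGroup E] {a θ D M : ℝ}

/-- The weight `W` as a function of `u = υ + μp` and `v = υ + μq`, with `N - 2s` replaced by an
arbitrary exponent `a`. -/
def remainderWeight (a : ℝ) (u v : E) : ℝ :=
  ‖u - v‖ * (1 + ‖v‖) + |‖u‖ ^ (-a) - ‖v‖ ^ (-a)|

lemma remainderWeight_le (ha : 0 < a) (hθ : 0 ≤ θ) (hθ1 : θ ≤ 1) {u v : E}
    (huv : ‖u - v‖ ≤ D) (hv : ‖v‖ ≤ M) :
    remainderWeight a u v ≤ ‖u - v‖ ^ θ *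
      (D ^ (1 - θ) * (1 + M) + (1 + a) * (‖u‖ ^ (-(a + θ)) + ‖v‖ ^ (-(a + θ)))) := by
  have hlin : ‖u - v‖ * (1 + ‖v‖) ≤ ‖u - v‖ ^ θ * (D ^ (1 - θ) * (1 + M)) :=
    calc ‖u - v‖ * (1 + ‖v‖) = ‖u - v‖ ^ θ * (‖u - v‖ ^ (1 - θ) * (1 + ‖v‖)) := by
          rw [← mul_assoc, ← Real.rpow_add' (norm_nonneg _) (by simp), add_sub_cancel,
            Real.rpow_one]
      _ ≤ ‖u - v‖ ^ θ * (D ^ (1 - θ) * (1 + M)) := by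
          have hD : 0 ≤ D := (norm_nonneg _).trans huv
          gcongr
  have hsing : |‖u‖ ^ (-a) - ‖v‖ ^ (-a)| ≤
      ‖u - v‖ ^ θ * ((1 + a) * (‖u‖ ^ (-(a + θ)) + ‖v‖ ^ (-(a + θ)))) :=
    calc |‖u‖ ^ (-a) - ‖v‖ ^ (-a)|
        ≤ (1 + a) * |‖u‖ - ‖v‖| ^ θ * (‖u‖ ^ (-(a + θ)) + ‖v‖ ^ (-(a + θ))) :=
          abs_rpow_neg_sub_le ha hθ hθ1 (norm_nonneg u) (norm_nonneg v)
      _ ≤ (1 + a) * ‖u - v‖ ^ θ * (‖u‖ ^ (-(a + θ)) + ‖v‖ ^ (-(a + θ))) := by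
          gcongr; exact abs_norm_sub_norm_le u v
      _ = _ := by ring
  exact (add_le_add hlin hsing).trans_eq (mul_add _ _ _).symm

lemma exists_remainderWeight_le_truncPow (ha : 0 < a) (hθ : 0 ≤ θ) (hθ1 : θ ≤ 1) (hD : 0 ≤ D)
    (hM : 0 ≤ M) {r : ℝ} (hr : 0 < r) :
    ∃ C, 0 ≤ C ∧ ∀ u v : E, ‖u - v‖ ≤ D → ‖v‖ ≤ M → remainderWeight a u v ≤
      C * ‖u - v‖ ^ θ * (1 + truncPow (a + θ) r u + truncPow (a + θ) r v) := by
  set A := D ^ (1 - θ) * (1 + M)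
  set B := r ^ (-(a + θ))
  have : 0 ≤ A := by positivity
  have : 0 ≤ B := by positivity
  refine ⟨A + (1 + a) * (1 + 2 * B), by positivity, fun u v huv hv => ?_⟩
  set Tu := truncPow (a + θ) r u
  set Tv := truncPow (a + θ) r v
  have hTu : 0 ≤ Tu := truncPow_nonneg _ _ _
  have hTv : 0 ≤ Tv := truncPow_nonneg _ _ _
  calc remainderWeight a u v
      ≤ ‖u - v‖ ^ θ * (A + (1 + a) * (‖u‖ ^ (-(a + θ)) + ‖v‖ ^ (-(a + θ)))) :=
        remainderWeight_le ha hθ hθ1 huv hv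
    _ ≤ ‖u - v‖ ^ θ * (A + (1 + a) * ((B + Tu) + (B + Tv))) := by
        gcongr <;> exact rpow_neg_le_add_truncPow (by positivity) hr _
    _ ≤ ‖u - v‖ ^ θ * ((A + (1 + a) * (1 + 2 * B)) * (1 + Tu + Tv)) := by
        gcongr
        have : 0 ≤ (1 + a) * (1 + 2 * B * (Tu + Tv)) + A * (Tu + Tv) := by positivity
        linarith
    _ = _ := by ring

end Weight

section Domination

variable {E : Type*} [NormedAddCommGroup E] [NormedSpace ℝ E] {b c R μ : ℝ} {υ x y : E}

/-- The part of the rescaled singularity `x ↦ |υ + μx|^{-c}` near its pole `-υ/μ`; the truncation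
radius `|υ|/2` keeps its support away from the origin. -/
def rescaledPole (c μ : ℝ) (υ x : E) : ℝ :=
  truncPow c (‖υ‖ / 2) (υ + μ • x)

lemma rescaledPole_nonneg (c μ : ℝ) (υ x : E) : 0 ≤ rescaledPole c μ υ x :=
  truncPow_nonneg _ _ _

lemma norm_le_add_mul_norm_sub_add_mul_norm (hμ : 0 ≤ μ) :
    ‖υ‖ ≤ ‖υ + μ • x‖ + μ * ‖x - y‖ + μ * ‖y‖ := by
  have h := norm_sub_le_of_le (norm_sub_le (υ + μ • x) (μ • (x - y))) (le_refl ‖μ • y‖)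
  rwa [show υ + μ • x - μ • (x - y) - μ • y = υ by module, norm_smul, norm_smul,
    Real.norm_of_nonneg hμ] at h

lemma rescaledPole_eq_zero (hμ : 0 ≤ μ) (hμR : 4 * μ * R ≤ ‖υ‖) (hx : ‖x‖ < R) :
    rescaledPole c μ υ x = 0 := by
  have htri := norm_le_add_mul_norm_sub_add_mul_norm (υ := υ) (x := x) (y := x) hμ
  rw [sub_self, norm_zero, mul_zero, add_zero] at htri
  have hμx : μ * ‖x‖ ≤ μ * R := by gcongr
  exact truncPow_of_le (by linarith [norm_nonneg υ])

lemma rpow_neg_norm_sub_mul_rescaledPole_le (hb : 0 ≤ b) (hμ : 0 < μ) (hυ : υ ≠ 0)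
    (hμR : 4 * μ * R ≤ ‖υ‖) (hy : ‖y‖ < R) :
    ‖x - y‖ ^ (-b) * rescaledPole c μ υ x ≤ (4 * μ / ‖υ‖) ^ b * rescaledPole c μ υ x := by
  rcases le_or_gt (‖υ‖ / 2) ‖υ + μ • x‖ with hfar | hnear
  · rw [rescaledPole, truncPow_of_le hfar, mul_zero, mul_zero]
  have hdist : ‖υ‖ / (4 * μ) ≤ ‖x - y‖ := by
    have htri := norm_le_add_mul_norm_sub_add_mul_norm (υ := υ) (x := x) (y := y) hμ.le
    have hμy : μ * ‖y‖ ≤ μ * R := by gcongr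
    rw [div_le_iff₀ (by positivity)]
    linarith
  gcongr
  · exact rescaledPole_nonneg _ _ _ _
  · rw [← inv_div ‖υ‖, Real.inv_rpow (by positivity), ← Real.rpow_neg (by positivity)]
    exact Real.rpow_le_rpow_of_nonpos (by positivity) hdist (by linarith)

lemma mul_dampedKernel_sub_le (hb : 0 ≤ b) (hμ : 0 < μ) (hυ : υ ≠ 0) (hμR : 4 * μ * R ≤ ‖υ‖)
    (hy : ‖y‖ < R) :
    (1 + rescaledPole c μ υ x + rescaledPole c μ υ y) * dampedKernel b (x - y) ≤
      dampedKernel b (x - y) + (4 * μ / ‖υ‖) ^ b * rescaledPole c μ υ x := by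
  have hfar : dampedKernel b (x - y) * rescaledPole c μ υ x ≤
      (4 * μ / ‖υ‖) ^ b * rescaledPole c μ υ x :=
    (mul_le_mul_of_nonneg_right (dampedKernel_le_rpow_neg b _) (rescaledPole_nonneg _ _ _ _)).trans
      (rpow_neg_norm_sub_mul_rescaledPole_le hb hμ hυ hμR hy)
  rw [rescaledPole_eq_zero hμ.le hμR hy]
  linarith

/-- The dominating function of the rescaled integrand. The first summand is the contribution away
from the pole `-υ/μ`, the other two the one where `q` respectively `p` is close to the pole. -/
def dominant (a b c R μ : ℝ) (υ p q : E) : ℝ :=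
  (truncPow 0 R p + truncPow a R q) * dampedKernel b (p - q) +
    (4 * μ / ‖υ‖) ^ b *
      (truncPow 0 R p * rescaledPole c μ υ q + rescaledPole c μ υ p * truncPow a R q)

lemma mul_rpow_neg_mul_dampedKernel_le_dominant {a : ℝ} (ha : 0 ≤ a) (hb : 0 ≤ b) (hR : 1 ≤ R)
    (hμ : 0 < μ) (hυ : υ ≠ 0) (hμR : 4 * μ * R ≤ ‖υ‖) {p q : E} (hpq : ‖p‖ < R ∨ ‖q‖ < R) :
    (1 + rescaledPole c μ υ p + rescaledPole c μ υ q) * ‖q‖ ^ (-a) * dampedKernel b (p - q) ≤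
      dominant a b c R μ υ p q := by
  unfold dominant
  set k := dampedKernel b (p - q) with hk_def
  set Sp := rescaledPole c μ υ p
  set Sq := rescaledPole c μ υ q
  set χ := truncPow 0 R p with hχ_def
  set G := (4 * μ / ‖υ‖) ^ b
  have hk : 0 ≤ k := dampedKernel_nonneg _ _
  have hSp : 0 ≤ Sp := rescaledPole_nonneg _ _ _ _
  have hSq : 0 ≤ Sq := rescaledPole_nonneg _ _ _ _
  have hχ : 0 ≤ χ := truncPow_nonneg _ _ _
  rcases lt_or_ge ‖q‖ R with hq | hq
  · have hnear : (1 + Sp + Sq) * k ≤ k + G * Sp := mul_dampedKernel_sub_le hb hμ hυ hμR hq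
    have hrest : 0 ≤ χ * k + G * (χ * Sq) := by positivity
    rw [truncPow_of_lt hq]
    linarith [mul_le_mul_of_nonneg_right hnear (show 0 ≤ ‖q‖ ^ (-a) by positivity)]
  · have hp : ‖p‖ < R := hpq.resolve_right hq.not_gt
    have hnear : (1 + Sp + Sq) * k ≤ k + G * Sq := by
      rw [hk_def, dampedKernel_sub_comm, add_right_comm]
      exact mul_dampedKernel_sub_le hb hμ hυ hμR hp
    have hq1 : ‖q‖ ^ (-a) ≤ 1 :=
      Real.rpow_le_one_of_one_le_of_nonpos (hR.trans hq) (by linarith)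
    have hχ1 : χ = 1 := by rw [hχ_def, truncPow_of_lt hp, neg_zero, Real.rpow_zero]
    calc (1 + Sp + Sq) * ‖q‖ ^ (-a) * k ≤ (1 + Sp + Sq) * 1 * k := by gcongr
      _ ≤ k + G * Sq := by rwa [mul_one]
      _ = _ := by rw [hχ1, truncPow_of_le hq]; ring

lemma dominant_nonneg (a b c R : ℝ) (hμ : 0 ≤ μ) (υ p q : E) : 0 ≤ dominant a b c R μ υ p q := by
  have hp := truncPow_nonneg 0 R p
  have hq := truncPow_nonneg a R q
  have hSp := rescaledPole_nonneg c μ υ p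
  have hSq := rescaledPole_nonneg c μ υ q
  have hk := dampedKernel_nonneg b (p - q)
  unfold dominant
  positivity

lemma ofReal_dominant (a b c R : ℝ) (hμ : 0 ≤ μ) (υ p q : E) :
    ENNReal.ofReal (dominant a b c R μ υ p q) =
      ENNReal.ofReal (truncPow 0 R p) * ENNReal.ofReal (dampedKernel b (p - q)) +
        ENNReal.ofReal (truncPow a R q) * ENNReal.ofReal (dampedKernel b (p - q)) +
        ENNReal.ofReal ((4 * μ / ‖υ‖) ^ b) *
          (ENNReal.ofReal (truncPow 0 R p) * ENNReal.ofReal (rescaledPole c μ υ q) +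
            ENNReal.ofReal (rescaledPole c μ υ p) * ENNReal.ofReal (truncPow a R q)) := by
  have hp := truncPow_nonneg 0 R p
  have hq := truncPow_nonneg a R q
  have hSp := rescaledPole_nonneg c μ υ p
  have hSq := rescaledPole_nonneg c μ υ q
  have hk := dampedKernel_nonneg b (p - q)
  rw [dominant, add_mul, ← ENNReal.ofReal_mul hp, ← ENNReal.ofReal_mul hq,
    ← ENNReal.ofReal_mul hp, ← ENNReal.ofReal_mul hSp,
    ← ENNReal.ofReal_add (by positivity) (by positivity),
    ← ENNReal.ofReal_add (by positivity) (by positivity), ← ENNReal.ofReal_mul (by positivity),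
    ← ENNReal.ofReal_add (by positivity) (by positivity)]

variable [MeasurableSpace E] [BorelSpace E]

@[fun_prop]
lemma measurable_rescaledPole (c μ : ℝ) (υ : E) : Measurable (rescaledPole c μ υ) :=
  (measurable_truncPow c (‖υ‖ / 2)).comp (by fun_prop)

variable [FiniteDimensional ℝ E] (ν : Measure E) [ν.IsAddHaarMeasure]

lemma lintegral_rescaledPole (c : ℝ) (hμ : 0 < μ) (υ : E) :
    ∫⁻ x, ENNReal.ofReal (rescaledPole c μ υ x) ∂ν =
      ENNReal.ofReal (μ ^ (-(finrank ℝ E : ℝ))) *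
        ∫⁻ x, ENNReal.ofReal (truncPow c (‖υ‖ / 2) x) ∂ν :=
  lintegral_comp_add_smul ν hμ υ (measurable_truncPow c (‖υ‖ / 2)).ennreal_ofReal

lemma lintegral_dominant (a b c R : ℝ) (hμ : 0 < μ) (υ : E) :
    ∫⁻ z, ENNReal.ofReal (dominant a b c R μ υ z.1 z.2) ∂(ν.prod ν) =
      ((∫⁻ x, ENNReal.ofReal (truncPow 0 R x) ∂ν) + ∫⁻ x, ENNReal.ofReal (truncPow a R x) ∂ν) *
        ((∫⁻ x, ENNReal.ofReal (dampedKernel b x) ∂ν) +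
          ENNReal.ofReal ((4 / ‖υ‖) ^ b * μ ^ (b - finrank ℝ E)) *
            ∫⁻ x, ENNReal.ofReal (truncPow c (‖υ‖ / 2) x) ∂ν) := by
  have hscale : ENNReal.ofReal ((4 / ‖υ‖) ^ b * μ ^ (b - finrank ℝ E)) =
      ENNReal.ofReal ((4 * μ / ‖υ‖) ^ b) * ENNReal.ofReal (μ ^ (-(finrank ℝ E : ℝ))) := by
    rw [← ENNReal.ofReal_mul (by positivity), mul_div_right_comm,
      Real.mul_rpow (by positivity) hμ.le, mul_assoc, ← Real.rpow_add hμ, sub_eq_add_neg]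
  simp_rw [ofReal_dominant a b c R hμ.le υ]
  rw [lintegral_add_left (by fun_prop), lintegral_add_left (by fun_prop),
    lintegral_const_mul _ (by fun_prop), lintegral_add_left (by fun_prop),
    lintegral_prod_fst_mul_sub ν (f := fun x => ENNReal.ofReal (truncPow 0 R x))
      (g := fun x => ENNReal.ofReal (dampedKernel b x)) (by fun_prop) (by fun_prop),
    lintegral_prod_snd_mul_sub ν (f := fun x => ENNReal.ofReal (truncPow a R x))
      (g := fun x => ENNReal.ofReal (dampedKernel b x)) (by fun_prop) (by fun_prop),
    lintegral_prod_mul (f := fun x => ENNReal.ofReal (truncPow 0 R x))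
      (g := fun x => ENNReal.ofReal (rescaledPole c μ υ x)) (by fun_prop) (by fun_prop),
    lintegral_prod_mul (f := fun x => ENNReal.ofReal (rescaledPole c μ υ x))
      (g := fun x => ENNReal.ofReal (truncPow a R x)) (by fun_prop) (by fun_prop),
    lintegral_rescaledPole ν c hμ, hscale]
  ring

lemma exists_lintegral_dominant_le [Nontrivial E] {a b c : ℝ} (ha : a < finrank ℝ E)
    (hc : c < finrank ℝ E) (hb : finrank ℝ E < b) (hb1 : b < finrank ℝ E + 1) (R : ℝ) (υ : E) :
    ∃ I ≠ ∞, ∀ μ, 0 < μ → μ ≤ 1 →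
      ∫⁻ z, ENNReal.ofReal (dominant a b c R μ υ z.1 z.2) ∂(ν.prod ν) ≤ I := by
  refine ⟨((∫⁻ x, ENNReal.ofReal (truncPow 0 R x) ∂ν) +
      ∫⁻ x, ENNReal.ofReal (truncPow a R x) ∂ν) *
    ((∫⁻ x, ENNReal.ofReal (dampedKernel b x) ∂ν) +
      ENNReal.ofReal ((4 / ‖υ‖) ^ b) * ∫⁻ x, ENNReal.ofReal (truncPow c (‖υ‖ / 2) x) ∂ν),
    ?_, fun μ hμ hμ1 => ?_⟩
  · have h0 : (0 : ℝ) < finrank ℝ E := mod_cast Module.finrank_pos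
    have hfin {e : ℝ} (he : e < finrank ℝ E) (r : ℝ) := (lintegral_truncPow_lt_top ν he r).ne
    have hker := (lintegral_dampedKernel_lt_top ν hb hb1).ne
    finiteness [hfin h0 R, hfin ha R, hfin hc (‖υ‖ / 2)]
  · rw [lintegral_dominant ν a b c R hμ υ]
    gcongr
    exact mul_le_of_le_one_right (by positivity) (Real.rpow_le_one hμ.le hμ1 (by linarith))

end Domination

section Cutoff

lemma hasCompactSupport_comp_norm_sq {E : Type*} [NormedAddCommGroup E] [ProperSpace E]
    {ρ : ℝ → ℝ} (hρ : HasCompactSupport ρ) : HasCompactSupport fun x : E => ρ (‖x‖ ^ 2) := by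
  rw [hasCompactSupport_iff_eventuallyEq, coclosedCompact_eq_cocompact] at hρ ⊢
  exact (((tendsto_pow_atTop two_ne_zero).comp tendsto_norm_cocompact_atTop).mono_right
    atTop_le_cocompact).eventually hρ

lemma exists_lipschitzWith_comp_norm_sq (E : Type*) [NormedAddCommGroup E] [InnerProductSpace ℝ E]
    [ProperSpace E] {ρ : ℝ → ℝ} (hρ : ContDiff ℝ 1 ρ) (hρc : HasCompactSupport ρ) :
    ∃ K, LipschitzWith K fun x : E => ρ (‖x‖ ^ 2) :=
  (hρ.comp (contDiff_norm_sq ℝ)).lipschitzWith_of_hasCompactSupport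
    (hasCompactSupport_comp_norm_sq hρc) one_ne_zero

lemma exists_abs_sub_le_mul_min {E : Type*} [NormedAddCommGroup E] {K : NNReal} {η : E → ℝ}
    (hη : LipschitzWith K η) (hηc : HasCompactSupport η) :
    ∃ L, 0 ≤ L ∧ ∀ p q, |η p - η q| ≤ L * min 1 ‖p - q‖ := by
  obtain ⟨M, hM⟩ := hηc.exists_bound_of_continuous hη.continuous
  have hM0 : 0 ≤ M := (norm_nonneg _).trans (hM 0)
  refine ⟨max (2 * M) K, by positivity, fun p q => ?_⟩
  rw [mul_min_of_nonneg _ _ (by positivity), mul_one]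
  refine le_min ?_ ?_
  · exact (norm_sub_le (η p) (η q)).trans (le_max_of_le_left (by linarith [hM p, hM q]))
  · exact (hη.norm_sub_le p q).trans (by gcongr; exact le_max_right _ _)

lemma exists_one_le_forall_eq_zero {E : Type*} [SeminormedAddCommGroup E] {η : E → ℝ}
    (hηc : HasCompactSupport η) : ∃ R, 1 ≤ R ∧ ∀ x, R ≤ ‖x‖ → η x = 0 := by
  obtain ⟨R, hR1, hR⟩ := hηc.isCompact.isBounded.subset_ball_lt 1 0
  refine ⟨R, hR1.le, fun x hx => image_eq_zero_of_notMem_tsupport fun hmem => ?_⟩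
  exact hx.not_gt (mem_ball_zero_iff.1 (hR hmem))

end Cutoff

section Limit

lemma tendsto_ofReal_mul_rpow_mul_nhdsGT_zero (C : ℝ) {θ : ℝ} (hθ : 0 < θ) {I : ℝ≥0∞}
    (hI : I ≠ ∞) : Tendsto (fun μ : ℝ => ENNReal.ofReal (C * μ ^ θ) * I) (𝓝[>] 0) (𝓝 0) := by
  have hcont : Continuous fun μ : ℝ => C * μ ^ θ := by fun_prop (disch := exact hθ.le)
  have hpow : Tendsto (fun μ : ℝ => C * μ ^ θ) (𝓝[>] 0) (𝓝 0) := by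
    simpa [hθ.ne'] using (hcont.tendsto 0).mono_left nhdsWithin_le_nhds
  simpa using ENNReal.Tendsto.mul_const (ENNReal.tendsto_ofReal hpow) (.inr hI)

variable {E : Type*} [NormedAddCommGroup E] [NormedSpace ℝ E] {υ : E}

lemma remainderWeight_mul_div_le_dominant {a β θ C L R μ w : ℝ} (ha : 0 ≤ a) (hβ : θ < β)
    (hC : 0 ≤ C) (hR : 1 ≤ R) (hμ : 0 < μ) (hυ : υ ≠ 0) (hμR : 4 * μ * R ≤ ‖υ‖) {p q : E}
    (hpq : ‖p‖ < R ∨ ‖q‖ < R) (hL : 0 ≤ L) (hw0 : 0 ≤ w) (hw : w ≤ L * min 1 ‖p - q‖)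
    (hW : remainderWeight a (υ + μ • p) (υ + μ • q) ≤ C * (μ * ‖p - q‖) ^ θ *
      (1 + rescaledPole (a + θ) μ υ p + rescaledPole (a + θ) μ υ q)) :
    remainderWeight a (υ + μ • p) (υ + μ • q) * w / (‖q‖ ^ a * ‖p - q‖ ^ β) ≤
      C * L * μ ^ θ * dominant a (β - θ) (a + θ) R μ υ p q := by
  set T := 1 + rescaledPole (a + θ) μ υ p + rescaledPole (a + θ) μ υ q
  have hT : 0 ≤ T := by
    have hSp := rescaledPole_nonneg (a + θ) μ υ p
    have hSq := rescaledPole_nonneg (a + θ) μ υ q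
    positivity
  have hpow : ‖p - q‖ ^ (-(β - θ)) = ‖p - q‖ ^ θ * ‖p - q‖ ^ (-β) := by
    rw [← Real.rpow_add' (norm_nonneg _) (by linarith)]
    congr 1; ring
  calc remainderWeight a (υ + μ • p) (υ + μ • q) * w / (‖q‖ ^ a * ‖p - q‖ ^ β)
      ≤ (C * (μ * ‖p - q‖) ^ θ * T) * (L * min 1 ‖p - q‖) / (‖q‖ ^ a * ‖p - q‖ ^ β) := by
        gcongr
    _ = C * L * μ ^ θ * (T * ‖q‖ ^ (-a) * dampedKernel (β - θ) (p - q)) := by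
        rw [dampedKernel, hpow, Real.mul_rpow hμ.le (norm_nonneg _), Real.rpow_neg (norm_nonneg _),
          Real.rpow_neg (norm_nonneg _), div_eq_mul_inv, mul_inv]
        ring
    _ ≤ C * L * μ ^ θ * dominant a (β - θ) (a + θ) R μ υ p q := by
        gcongr
        exact mul_rpow_neg_mul_dampedKernel_le_dominant ha (by linarith) hR hμ hυ hμR hpq

lemma exists_eventually_integrand_le_dominant {a β θ : ℝ} (ha : 0 < a) (hθ : 0 ≤ θ) (hθ1 : θ ≤ 1)
    (hβ : θ < β) (hυ : υ ≠ 0) (r₁ r₂ : ℝ) {K : NNReal} {η : E → ℝ} (hη : LipschitzWith K η)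
    (hηc : HasCompactSupport η) :
    ∃ C R, 0 ≤ C ∧ ∀ᶠ μ in 𝓝[>] (0 : ℝ), ∀ p ∈ Metric.ball (0 : E) (r₁ / μ),
      ∀ q ∈ Metric.ball (0 : E) (r₂ / μ),
        remainderWeight a (υ + μ • p) (υ + μ • q) * |η p - η q| / (‖q‖ ^ a * ‖p - q‖ ^ β) ≤
          C * μ ^ θ * dominant a (β - θ) (a + θ) R μ υ p q := by
  obtain ⟨L, hL, hηL⟩ := exists_abs_sub_le_mul_min hη hηc
  obtain ⟨R, hR, hηR⟩ := exists_one_le_forall_eq_zero hηc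
  have hυ0 : 0 < ‖υ‖ := norm_pos_iff.2 hυ
  obtain ⟨C, hC, hW⟩ := exists_remainderWeight_le_truncPow (E := E) (D := |r₁| + |r₂|)
    (M := ‖υ‖ + |r₂|) ha hθ hθ1 (by positivity) (by positivity) (half_pos hυ0)
  refine ⟨C * L, R, by positivity, ?_⟩
  filter_upwards [Ioo_mem_nhdsGT (show 0 < ‖υ‖ / (4 * R) by positivity)]
    with μ ⟨hμ, hμR⟩ p hp q hq
  rw [lt_div_iff₀ (by positivity)] at hμR
  rw [mem_ball_zero_iff, lt_div_iff₀' hμ] at hp hq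
  by_cases hpq : ‖p‖ < R ∨ ‖q‖ < R
  · have hsub : ‖(υ + μ • p) - (υ + μ • q)‖ = μ * ‖p - q‖ := by
      rw [add_sub_add_left_eq_sub, ← smul_sub, norm_smul, Real.norm_of_nonneg hμ.le]
    refine remainderWeight_mul_div_le_dominant ha.le hβ hC hR hμ hυ (by linarith) hpq hL
      (abs_nonneg _) (hηL p q) ?_
    rw [← hsub]
    refine hW _ _ ?_ ?_
    · rw [hsub]
      have hle : μ * ‖p - q‖ ≤ μ * (‖p‖ + ‖q‖) := by gcongr; exact norm_sub_le p q
      linarith [le_abs_self r₁, le_abs_self r₂]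
    · refine (norm_add_le _ _).trans ?_
      rw [norm_smul, Real.norm_of_nonneg hμ.le]
      linarith [le_abs_self r₂]
  · obtain ⟨hp0, hq0⟩ := not_or.1 hpq
    rw [hηR p (not_lt.1 hp0), hηR q (not_lt.1 hq0), sub_self, abs_zero, mul_zero, zero_div]
    have hdom := dominant_nonneg a (β - θ) (a + θ) R hμ.le υ p q
    positivity

variable [FiniteDimensional ℝ E] [MeasurableSpace E] [BorelSpace E]

theorem statement13_general (ν : Measure E) [ν.IsAddHaarMeasure] {s : ℝ}
    (hs : s ∈ Set.Ioo (0 : ℝ) 1) (hsE : 2 * s < finrank ℝ E) (hυ : υ ≠ 0) (r₁ r₂ : ℝ)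
    {K : NNReal} {η : E → ℝ} (hη : LipschitzWith K η) (hηc : HasCompactSupport η) :
    Tendsto (fun μ : ℝ =>
      ∫⁻ p in Metric.ball (0 : E) (r₁ / μ) ×ˢ Metric.ball (0 : E) (r₂ / μ),
        ENNReal.ofReal
          ((μ * ‖p.1 - p.2‖ * (1 + ‖υ + μ • p.2‖) +
              |‖υ + μ • p.1‖ ^ (2 * s - (finrank ℝ E : ℝ)) -
                ‖υ + μ • p.2‖ ^ (2 * s - (finrank ℝ E : ℝ))|) *
            |η p.1 - η p.2| /
            (‖p.2‖ ^ ((finrank ℝ E : ℝ) - 2 * s) *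
              ‖p.1 - p.2‖ ^ ((finrank ℝ E : ℝ) + 2 * s))) ∂(ν.prod ν))
      (𝓝[>] (0 : ℝ)) (𝓝 0) := by
  obtain ⟨hs0, hs1⟩ := hs
  have hd : (0 : ℝ) < finrank ℝ E := by linarith
  have : Nontrivial E := Module.nontrivial_of_finrank_pos (R := ℝ) (mod_cast hd)
  set d := (finrank ℝ E : ℝ)
  obtain ⟨C, R, hC, hle⟩ := exists_eventually_integrand_le_dominant (a := d - 2 * s)
    (β := d + 2 * s) (θ := s) (by linarith) hs0.le hs1.le (by linarith) hυ r₁ r₂ hη hηc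
  obtain ⟨I, hI, hIle⟩ := exists_lintegral_dominant_le ν (a := d - 2 * s) (b := d + 2 * s - s)
    (c := d - 2 * s + s) (by linarith) (by linarith) (by linarith) (by linarith) R υ
  refine tendsto_of_tendsto_of_tendsto_of_le_of_le' tendsto_const_nhds
    (tendsto_ofReal_mul_rpow_mul_nhdsGT_zero C hs0 hI) (.of_forall fun _ => zero_le) ?_
  filter_upwards [hle, Ioc_mem_nhdsGT one_pos] with μ hμle ⟨hμ, hμ1⟩
  calc _ ≤ ∫⁻ z in Metric.ball (0 : E) (r₁ / μ) ×ˢ Metric.ball (0 : E) (r₂ / μ),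
          ENNReal.ofReal (C * μ ^ s) * ENNReal.ofReal
            (dominant (d - 2 * s) (d + 2 * s - s) (d - 2 * s + s) R μ υ z.1 z.2) ∂(ν.prod ν) := by
        refine setLIntegral_mono' (measurableSet_ball.prod measurableSet_ball) ?_
        rintro ⟨p, q⟩ ⟨hp, hq⟩
        rw [← ENNReal.ofReal_mul (by positivity)]
        refine ENNReal.ofReal_le_ofReal (Eq.trans_le ?_ (hμle p hp q hq))
        rw [remainderWeight, add_sub_add_left_eq_sub, ← smul_sub, norm_smul,
          Real.norm_of_nonneg hμ.le, neg_sub]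
    _ ≤ _ := setLIntegral_le_lintegral _ _
    _ = _ := lintegral_const_mul' _ _ ENNReal.ofReal_ne_top
    _ ≤ _ := by gcongr; exact hIle μ hμ hμ1

end Limit

/-- The rescaled remainder integral
`∬_{B_{ε/μ} × B_{2ε/μ}} W(μ;p,q) |ρ(|p|²)-ρ(|q|²)| / (|q|^{N-2s} |p-q|^{N+2s}) dp dq`
tends to `0` as `μ → 0⁺`, where
`W(μ;p,q) = μ|p-q|(1+|υ+μq|) + ||υ+μp|^{2s-N} - |υ+μq|^{2s-N}|`. -/
theorem statement13 (N : ℕ) (hN : 1 ≤ N) (s : ℝ) (hs : s ∈ Set.Ioo (0 : ℝ) 1)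
    (hNs : 2 * s < N)
    (υ : EuclideanSpace ℝ (Fin N)) (hυ : υ ≠ 0) (ε : ℝ) (hε : 0 < ε)
    (ρ : ℝ → ℝ) (hρ : ContDiff ℝ (⊤ : ℕ∞) ρ) (hρc : HasCompactSupport ρ)
    (hρsupp : tsupport ρ ⊆ Set.Ioo (-2 : ℝ) 2) :
    Tendsto (fun μ : ℝ =>
      ∫⁻ p in (Metric.ball (0 : EuclideanSpace ℝ (Fin N)) (ε / μ)) ×ˢ
          (Metric.ball (0 : EuclideanSpace ℝ (Fin N)) (2 * ε / μ)),
        ENNReal.ofReal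
          ((μ * ‖p.1 - p.2‖ * (1 + ‖υ + μ • p.2‖) +
              |‖υ + μ • p.1‖ ^ (2 * s - (N : ℝ)) - ‖υ + μ • p.2‖ ^ (2 * s - (N : ℝ))|) *
            |ρ (‖p.1‖ ^ 2) - ρ (‖p.2‖ ^ 2)| /
            (‖p.2‖ ^ ((N : ℝ) - 2 * s) * ‖p.1 - p.2‖ ^ ((N : ℝ) + 2 * s))))
      (𝓝[>] (0 : ℝ)) (𝓝 0) := by
  obtain ⟨K, hK⟩ := exists_lipschitzWith_comp_norm_sq (EuclideanSpace ℝ (Fin N))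
    (hρ.of_le (mod_cast le_top)) hρc
  have h := statement13_general volume hs (by rwa [finrank_euclideanSpace_fin]) hυ ε (2 * ε) hK
    (hasCompactSupport_comp_norm_sq hρc)
  rwa [finrank_euclideanSpace_fin] at h
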